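/- arXiv:2107.11619 — 5 statements merged into one kernel-verified Lean document; each statement's English description precedes it below -/
import Mathlib

section
/- Let d ≥ 1, L > 0, and let U : ℝ^d → ℝ be continuous and nonnegative with min_{x ∈ [−L,L]^d} U(x) = 0. Define H(x,y) = U(x) + |y|²/2 for (x,y) ∈ ℝ^d × ℝ^d. Fix real numbers 0 < α < δ. Then there exists C > 0 such that for all β > 0, ∫_{[−L,L]^d × ℝ^d} 1_{{H ≥ δ}}(x,y) e^{−β H(x,y)} dx dy ≤ C e^{−β(δ−α)} ∫_{[−L,L]^d × ℝ^d} e^{−β H(x,y)} dx dy; in particular, the Gibbs probability measure μ_β on [−L,L]^d × ℝ^d with density proportional to e^{−βH} satisfies μ_β({H ≥ δ}) ≤ C e^{−β(δ−α)} for all β > 0. -/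
open MeasureTheory Real Set

/-- The box `[-L, L]^d` in `ℝ^d`. -/
def boxSet (d : ℕ) (L : ℝ) : Set (EuclideanSpace ℝ (Fin d)) :=
  {x | ∀ i, x i ∈ Set.Icc (-L) L}

/-- Comparison of the tail `{δ ≤ H}` with the total mass of the weights `exp (-β * H)`, when
these are integrable and `{H ≤ α}` has positive measure. -/
theorem exists_integral_indicator_exp_le {X : Type*} [MeasurableSpace X] {μ : Measure X}
    {H : X → ℝ} (hH : Measurable H)
    (hint : ∀ β > 0, Integrable (fun z => Real.exp (-β * H z)) μ)
    {α δ : ℝ} (hαδ : α < δ) (hpos : 0 < μ {z | H z ≤ α}) :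
    ∃ C > 0, ∀ β > 0,
      (∫ z, Set.indicator {w | δ ≤ H w} (fun w => Real.exp (-β * H w)) z ∂μ)
      ≤ C * Real.exp (-β * (δ - α)) * ∫ z, Real.exp (-β * H z) ∂μ := by
  have hS : MeasurableSet {z | H z ≤ α} := measurableSet_le hH measurable_const
  have hT : MeasurableSet {z | δ ≤ H z} := measurableSet_le measurable_const hH
  set Z : ℝ := ∫ z, Real.exp (-1 * H z) ∂μ with hZ
  set m : ℝ := ∫ z in {z | H z ≤ α}, Real.exp (-1 * H z) ∂μ with hm
  have hint_one := hint 1 one_pos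
  have hm_pos : 0 < m := by
    rw [hm, setIntegral_pos_iff_support_of_nonneg_ae
      (Filter.Eventually.of_forall fun z => (Real.exp_pos _).le) hint_one.integrableOn]
    have hsupp : Function.support (fun z => Real.exp (-1 * H z)) = univ :=
      Function.support_eq_univ fun z => (Real.exp_pos _).ne'
    rwa [hsupp, univ_inter]
  have hmZ : m ≤ Z :=
    setIntegral_le_integral hint_one (Filter.Eventually.of_forall fun z => (Real.exp_pos _).le)
  have hZ_pos : 0 < Z := hm_pos.trans_le hmZ
  refine ⟨Real.exp (δ - α) * (Z / m), by positivity, fun β hβ => ?_⟩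
  have hcoef : Real.exp (δ - α) * (Z / m) * Real.exp (-β * (δ - α))
      = Z / m * Real.exp ((1 - β) * (δ - α)) := by
    rw [mul_right_comm, ← Real.exp_add, mul_comm]
    ring_nf
  rw [hcoef]
  have hZβ : 0 ≤ ∫ z, Real.exp (-β * H z) ∂μ := integral_nonneg fun z => (Real.exp_pos _).le
  rcases le_total β 1 with hβ1 | hβ1
  · have hone : 1 ≤ Z / m * Real.exp ((1 - β) * (δ - α)) :=
      one_le_mul_of_one_le_of_one_le ((one_le_div hm_pos).2 hmZ)
        (Real.one_le_exp (mul_nonneg (by linarith) (by linarith)))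
    calc _ ≤ ∫ z, Real.exp (-β * H z) ∂μ :=
          integral_mono ((hint β hβ).indicator hT) (hint β hβ)
            (Set.indicator_le_self' fun z _ => (Real.exp_pos _).le)
      _ ≤ _ := le_mul_of_one_le_left hZβ hone
  · have hnum : (∫ z, Set.indicator {w | δ ≤ H w} (fun w => Real.exp (-β * H w)) z ∂μ)
        ≤ Real.exp ((1 - β) * δ) * Z := by
      rw [hZ, ← integral_const_mul]
      refine integral_mono ((hint β hβ).indicator hT) (hint_one.const_mul _)
        (Set.indicator_le' (fun z hz => ?_) fun z _ => by positivity)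
      rw [← Real.exp_add, Real.exp_le_exp]
      have hz' : δ ≤ H z := hz
      nlinarith
    have hden : Real.exp ((1 - β) * α) * m ≤ ∫ z, Real.exp (-β * H z) ∂μ := by
      rw [hm, ← integral_const_mul]
      refine le_trans (setIntegral_mono_on (hint_one.const_mul _).integrableOn
        (hint β hβ).integrableOn hS fun z hz => ?_) (setIntegral_le_integral (hint β hβ)
          (Filter.Eventually.of_forall fun z => (Real.exp_pos _).le))
      rw [← Real.exp_add, Real.exp_le_exp]
      have hz' : H z ≤ α := hz
      nlinarith
    calc _ ≤ Real.exp ((1 - β) * δ) * Z := hnum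
      _ = Z / m * Real.exp ((1 - β) * (δ - α)) * (Real.exp ((1 - β) * α) * m) := by
          have hexp : Real.exp ((1 - β) * δ)
              = Real.exp ((1 - β) * (δ - α)) * Real.exp ((1 - β) * α) := by
            rw [← Real.exp_add]; ring_nf
          rw [hexp]
          field_simp
      _ ≤ _ := by gcongr

theorem isCompact_boxSet (d : ℕ) (L : ℝ) : IsCompact (boxSet d L) := by
  have hbox : boxSet d L = (PiLp.continuousLinearEquiv 2 ℝ fun _ : Fin d => ℝ).toHomeomorph ⁻¹'
      Set.pi univ fun _ => Icc (-L) L := by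
    ext x
    simp [boxSet, Pi.le_def, forall_and]
  rw [hbox, Homeomorph.isCompact_preimage]
  exact isCompact_univ_pi fun _ => isCompact_Icc

/-- A strict sublevel set of a continuous function that meets the box meets its interior. -/
theorem exists_mem_interior_boxSet_lt {d : ℕ} {L : ℝ} (hL : 0 < L)
    {U : EuclideanSpace ℝ (Fin d) → ℝ} (hU : Continuous U) {a : ℝ}
    {x₀ : EuclideanSpace ℝ (Fin d)} (hx₀ : x₀ ∈ boxSet d L) (ha : U x₀ < a) :
    ∃ x ∈ interior (boxSet d L), U x < a := by
  have hopen : IsOpen {x : EuclideanSpace ℝ (Fin d) | ∀ i, x i ∈ Ioo (-L) L} := by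
    simp only [ofPred_forall]
    exact isOpen_iInter_of_finite fun i => isOpen_Ioo.preimage (by fun_prop)
  have hsub : {x : EuclideanSpace ℝ (Fin d) | ∀ i, x i ∈ Ioo (-L) L} ⊆ boxSet d L :=
    fun x hx i => Ioo_subset_Icc_self (hx i)
  have hcont : Continuous fun t : ℝ => U (t • x₀) := by fun_prop
  have hev : ∀ᶠ t : ℝ in nhdsWithin 1 (Iio 1), U (t • x₀) < a :=
    (hcont.continuousAt.eventually_lt_const (by simpa using ha)).filter_mono nhdsWithin_le_nhds
  obtain ⟨t, hta, ht⟩ := (hev.and (Ioo_mem_nhdsLT (zero_lt_one (α := ℝ)))).exists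
  refine ⟨t • x₀, interior_maximal hsub hopen fun i => ?_, hta⟩
  obtain ⟨h₁, h₂⟩ := hx₀ i
  obtain ⟨h₃, h₄⟩ := ht
  simp only [PiLp.smul_apply, smul_eq_mul, mem_Ioo]
  constructor <;> nlinarith

theorem stmt_0 (d : ℕ) (hd : 1 ≤ d) (L : ℝ) (hL : 0 < L)
    (U : EuclideanSpace ℝ (Fin d) → ℝ) (hUcont : Continuous U)
    (hUnonneg : ∀ x, 0 ≤ U x)
    (hUmin : ∃ x₀ ∈ boxSet d L, U x₀ = 0)
    (α δ : ℝ) (hα : 0 < α) (hαδ : α < δ)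
    (H : EuclideanSpace ℝ (Fin d) × EuclideanSpace ℝ (Fin d) → ℝ)
    (hH : ∀ z, H z = U z.1 + ‖z.2‖ ^ 2 / 2) :
    ∃ C > 0, ∀ β > 0,
      (∫ z in (boxSet d L) ×ˢ (Set.univ : Set (EuclideanSpace ℝ (Fin d))),
          Set.indicator {w | δ ≤ H w} (fun w => Real.exp (-β * H w)) z)
      ≤ C * Real.exp (-β * (δ - α)) *
        ∫ z in (boxSet d L) ×ˢ (Set.univ : Set (EuclideanSpace ℝ (Fin d))),
          Real.exp (-β * H z) := by
  have hHcont : Continuous H := by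
    rw [funext hH]
    fun_prop
  refine exists_integral_indicator_exp_le hHcont.measurable (fun β hβ => ?_) hαδ ?_
  · have hx : Integrable (fun x => Real.exp (-β * U x)) (volume.restrict (boxSet d L)) :=
      ContinuousOn.integrableOn_compact (isCompact_boxSet d L) (by fun_prop)
    have hy : Integrable (fun y : EuclideanSpace ℝ (Fin d) => Real.exp (-(β / 2) * ‖y‖ ^ 2)) := by
      have h := (GaussianFourier.integrable_cexp_neg_mul_sq_norm_add (b := (β / 2 : ℝ))
        (by rw [Complex.ofReal_re]; positivity) 0 (0 : EuclideanSpace ℝ (Fin d))).norm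
      refine h.congr (Filter.Eventually.of_forall fun y => ?_)
      simp only [Complex.norm_exp, zero_mul, add_zero]
      norm_cast
    rw [Measure.volume_eq_prod, ← Measure.prod_restrict, Measure.restrict_univ]
    refine (hx.mul_prod hy).congr (Filter.Eventually.of_forall fun z => ?_)
    simp only [hH, ← Real.exp_add]
    ring_nf
  · obtain ⟨x₀, hx₀, hUx₀⟩ := hUmin
    obtain ⟨x, hx, hUx⟩ := exists_mem_interior_boxSet_lt hL hUcont hx₀ (hUx₀ ▸ hα)
    have hopen : IsOpen ({z | H z < α} ∩ interior (boxSet d L) ×ˢ univ) :=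
      (isOpen_lt hHcont continuous_const).inter (isOpen_interior.prod isOpen_univ)
    refine (hopen.measure_pos volume ⟨(x, 0), by simpa [hH] using hUx, hx, mem_univ _⟩).trans_le ?_
    rw [Measure.restrict_apply (measurableSet_le hHcont.measurable measurable_const)]
    refine measure_mono fun z ⟨hz, hzbox⟩ => ⟨?_, interior_subset hzbox.1, mem_univ _⟩
    exact le_of_lt (show H z < α from hz)
end

section
/- Let d ≥ 1 and β ≥ 1. For every function g : ℝ^d → ℝ of class C¹ such that ∫_{ℝ^d} g(y)² e^{−β|y|²/2} dy < ∞ and ∫_{ℝ^d} |∇g(y)|² e^{−β|y|²/2} dy < ∞, one has ∫_{ℝ^d} |y|² g(y)² e^{−β|y|²/2} dy ≤ (2d/β) ∫_{ℝ^d} g(y)² e^{−β|y|²/2} dy + (4/β²) ∫_{ℝ^d} |∇g(y)|² e^{−β|y|²/2} dy (in particular the left-hand side is finite). -/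
open MeasureTheory Real

section GaussianMoment

open scoped RealInnerProductSpace Gradient

open Filter Topology

/-- A slightly stronger Gaussian weight absorbs the second moment. -/
lemma norm_sq_mul_gaussian_le {E : Type*} [NormedAddCommGroup E] {β γ : ℝ} (hβγ : β < γ)
    (y : E) :
    ‖y‖ ^ 2 * exp (-γ * ‖y‖ ^ 2 / 2) ≤ 2 / (γ - β) * exp (-β * ‖y‖ ^ 2 / 2) := by
  have hpos : 0 < γ - β := sub_pos.2 hβγ
  have hexp : (γ - β) / 2 * ‖y‖ ^ 2 ≤ exp ((γ - β) / 2 * ‖y‖ ^ 2) :=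
    (by linarith : _ ≤ (γ - β) / 2 * ‖y‖ ^ 2 + 1).trans (add_one_le_exp _)
  calc ‖y‖ ^ 2 * exp (-γ * ‖y‖ ^ 2 / 2)
      = 2 / (γ - β) * (((γ - β) / 2 * ‖y‖ ^ 2) * exp (-γ * ‖y‖ ^ 2 / 2)) := by field_simp
    _ ≤ 2 / (γ - β) * (exp ((γ - β) / 2 * ‖y‖ ^ 2) * exp (-γ * ‖y‖ ^ 2 / 2)) := by gcongr
    _ = 2 / (γ - β) * exp (-β * ‖y‖ ^ 2 / 2) := by
      rw [← exp_add]
      congr 2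
      ring

variable {E : Type*} [NormedAddCommGroup E] [InnerProductSpace ℝ E]

lemma hasFDerivAt_inner_mul_gaussian (γ : ℝ) (v y : E) :
    HasFDerivAt (fun y : E => ⟪v, y⟫ * exp (-γ * ‖y‖ ^ 2 / 2))
      (⟪v, y⟫ • (exp (-γ * ‖y‖ ^ 2 / 2) • ((-γ / 2) • (2 • innerSL ℝ y)))
        + exp (-γ * ‖y‖ ^ 2 / 2) • innerSL ℝ v) y := by
  have hw : HasFDerivAt (fun y : E => exp (-γ * ‖y‖ ^ 2 / 2))
      (exp (-γ * ‖y‖ ^ 2 / 2) • ((-γ / 2) • (2 • innerSL ℝ y))) y := by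
    have h := (((hasStrictFDerivAt_norm_sq y).hasFDerivAt).const_mul (-γ / 2)).exp
    have e (x : E) : -γ / 2 * ‖x‖ ^ 2 = -γ * ‖x‖ ^ 2 / 2 := by ring
    simpa only [e] using h
  exact (innerSL ℝ v).hasFDerivAt.mul hw

variable [MeasurableSpace E] [BorelSpace E] [FiniteDimensional ℝ E]

/-- Directional second moment bound for a function all of whose relevant Gaussian moments
are finite. -/
lemma integral_inner_sq_mul_gaussian_le {γ : ℝ} (hγ : 0 < γ) {g : E → ℝ} (hg : ContDiff ℝ 1 g)
    (hg0 : Integrable (fun y : E => g y ^ 2 * exp (-γ * ‖y‖ ^ 2 / 2)))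
    (hgrad : Integrable (fun y : E => ‖∇ g y‖ ^ 2 * exp (-γ * ‖y‖ ^ 2 / 2)))
    (hmom : Integrable (fun y : E => ‖y‖ ^ 2 * g y ^ 2 * exp (-γ * ‖y‖ ^ 2 / 2)))
    {v : E} (hv : ‖v‖ = 1) :
    Integrable (fun y : E => ⟪v, y⟫ ^ 2 * g y ^ 2 * exp (-γ * ‖y‖ ^ 2 / 2)) ∧
    Integrable (fun y : E => ⟪v, ∇ g y⟫ ^ 2 * exp (-γ * ‖y‖ ^ 2 / 2)) ∧
    ∫ y : E, ⟪v, y⟫ ^ 2 * g y ^ 2 * exp (-γ * ‖y‖ ^ 2 / 2) ≤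
      (2 / γ) * (∫ y : E, g y ^ 2 * exp (-γ * ‖y‖ ^ 2 / 2)) +
      (4 / γ ^ 2) * ∫ y : E, ⟪v, ∇ g y⟫ ^ 2 * exp (-γ * ‖y‖ ^ 2 / 2) := by
  have hgc : Continuous g := hg.continuous
  have hgrc : Continuous (∇ g) :=
    (InnerProductSpace.toDual ℝ E).symm.continuous.comp (hg.continuous_fderiv one_ne_zero)
  have hinner (x : E) : ⟪v, x⟫ ^ 2 ≤ ‖x‖ ^ 2 := by
    have h := abs_real_inner_le_norm v x
    rw [hv, one_mul] at h
    exact sq_le_sq' (abs_le.1 h).1 (abs_le.1 h).2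
  have hmomv : Integrable (fun y : E => ⟪v, y⟫ ^ 2 * g y ^ 2 * exp (-γ * ‖y‖ ^ 2 / 2)) := by
    refine hmom.mono' (by fun_prop) (ae_of_all _ fun y => ?_)
    rw [norm_of_nonneg (by positivity)]
    gcongr ?_ * _ * _
    exact hinner y
  have hgradv : Integrable (fun y : E => ⟪v, ∇ g y⟫ ^ 2 * exp (-γ * ‖y‖ ^ 2 / 2)) := by
    refine hgrad.mono' (by fun_prop) (ae_of_all _ fun y => ?_)
    rw [norm_of_nonneg (by positivity)]
    gcongr ?_ * _
    exact hinner _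
  refine ⟨hmomv, hgradv, ?_⟩
  have hderiv (y : E) : fderiv ℝ (fun y => g y ^ 2) y v = 2 * g y * ⟪v, ∇ g y⟫ := by
    have hd : DifferentiableAt ℝ g y := (hg.differentiable one_ne_zero) y
    rw [(hd.hasFDerivAt.pow 2).fderiv, real_inner_comm, gradient,
      InnerProductSpace.toDual_symm_apply]
    simp
  have hweight (y : E) : fderiv ℝ (fun y : E => ⟪v, y⟫ * exp (-γ * ‖y‖ ^ 2 / 2)) y v =
      exp (-γ * ‖y‖ ^ 2 / 2) - γ * (⟪v, y⟫ ^ 2 * exp (-γ * ‖y‖ ^ 2 / 2)) := by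
    rw [(hasFDerivAt_inner_mul_gaussian γ v y).fderiv]
    simp [real_inner_comm v y, hv]
    ring
  have hcross : Integrable (fun y : E =>
      (⟪v, y⟫ * exp (-γ * ‖y‖ ^ 2 / 2)) * fderiv ℝ (fun y => g y ^ 2) y v) := by
    simp_rw [hderiv]
    refine (hmomv.add hgradv).mono' (by fun_prop) (ae_of_all _ fun y => ?_)
    have hw := exp_pos (-γ * ‖y‖ ^ 2 / 2)
    simp only [Pi.add_apply, norm_eq_abs]
    rw [abs_le]
    constructor
    · nlinarith [mul_nonneg hw.le (sq_nonneg (⟪v, y⟫ * g y + ⟪v, ∇ g y⟫))]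
    · nlinarith [mul_nonneg hw.le (sq_nonneg (⟪v, y⟫ * g y - ⟪v, ∇ g y⟫))]
  have hparts_eq (y : E) : fderiv ℝ (fun y : E => ⟪v, y⟫ * exp (-γ * ‖y‖ ^ 2 / 2)) y v * g y ^ 2
      = g y ^ 2 * exp (-γ * ‖y‖ ^ 2 / 2)
        - γ * (⟪v, y⟫ ^ 2 * g y ^ 2 * exp (-γ * ‖y‖ ^ 2 / 2)) := by
    rw [hweight]; ring
  have hprod : Integrable (fun y : E => (⟪v, y⟫ * exp (-γ * ‖y‖ ^ 2 / 2)) * g y ^ 2) := by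
    refine (hmomv.add hg0).mono' (by fun_prop) (ae_of_all _ fun y => ?_)
    have hw : 0 ≤ g y ^ 2 * exp (-γ * ‖y‖ ^ 2 / 2) := by positivity
    simp only [Pi.add_apply, norm_eq_abs]
    rw [abs_le]
    constructor
    · nlinarith [mul_nonneg hw (sq_nonneg (⟪v, y⟫ + 1)), mul_nonneg hw (sq_nonneg ⟪v, y⟫)]
    · nlinarith [mul_nonneg hw (sq_nonneg (⟪v, y⟫ - 1)), mul_nonneg hw (sq_nonneg ⟪v, y⟫)]
  have hparts := integral_mul_fderiv_eq_neg_fderiv_mul_of_integrable (μ := (volume : Measure E))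
    (by simp_rw [hparts_eq]; exact hg0.sub (hmomv.const_mul γ)) hcross hprod
    (fun x _ => (hasFDerivAt_inner_mul_gaussian γ v x).differentiableAt)
    (fun x _ => ((hg.differentiable one_ne_zero) x).pow 2)
  simp_rw [hparts_eq] at hparts
  rw [integral_sub hg0 (hmomv.const_mul γ), integral_const_mul] at hparts
  have hyoung : ∫ y : E, (⟪v, y⟫ * exp (-γ * ‖y‖ ^ 2 / 2)) * fderiv ℝ (fun y => g y ^ 2) y v ≤
      ∫ y : E, (γ / 2 * (⟪v, y⟫ ^ 2 * g y ^ 2 * exp (-γ * ‖y‖ ^ 2 / 2))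
        + 2 / γ * (⟪v, ∇ g y⟫ ^ 2 * exp (-γ * ‖y‖ ^ 2 / 2))) := by
    refine integral_mono hcross ((hmomv.const_mul _).add (hgradv.const_mul _)) fun y => ?_
    simp only [hderiv]
    have hsq : 0 ≤ exp (-γ * ‖y‖ ^ 2 / 2) / (2 * γ) *
        (γ * (⟪v, y⟫ * g y) - 2 * ⟪v, ∇ g y⟫) ^ 2 := by positivity
    have hexpand : exp (-γ * ‖y‖ ^ 2 / 2) / (2 * γ) *
        (γ * (⟪v, y⟫ * g y) - 2 * ⟪v, ∇ g y⟫) ^ 2 =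
        (γ / 2 * (⟪v, y⟫ ^ 2 * g y ^ 2 * exp (-γ * ‖y‖ ^ 2 / 2))
        + 2 / γ * (⟪v, ∇ g y⟫ ^ 2 * exp (-γ * ‖y‖ ^ 2 / 2)))
        - ⟪v, y⟫ * exp (-γ * ‖y‖ ^ 2 / 2) * (2 * g y * ⟪v, ∇ g y⟫) := by
      field_simp
      ring
    linarith
  rw [integral_add (hmomv.const_mul _) (hgradv.const_mul _), integral_const_mul,
    integral_const_mul, hparts] at hyoung
  generalize (∫ y : E, ⟪v, y⟫ ^ 2 * g y ^ 2 * exp (-γ * ‖y‖ ^ 2 / 2)) = M at *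
  generalize (∫ y : E, g y ^ 2 * exp (-γ * ‖y‖ ^ 2 / 2)) = A at *
  generalize (∫ y : E, ⟪v, ∇ g y⟫ ^ 2 * exp (-γ * ‖y‖ ^ 2 / 2)) = B at *
  have hM : γ / 2 * M ≤ A + 2 / γ * B := by linarith
  calc M = 2 / γ * (γ / 2 * M) := by field_simp
    _ ≤ 2 / γ * (A + 2 / γ * B) := by gcongr
    _ = 2 / γ * A + 4 / γ ^ 2 * B := by field_simp; ring

lemma integral_norm_sq_mul_gaussian_le {γ : ℝ} (hγ : 0 < γ) {g : E → ℝ} (hg : ContDiff ℝ 1 g)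
    (hg0 : Integrable (fun y : E => g y ^ 2 * exp (-γ * ‖y‖ ^ 2 / 2)))
    (hgrad : Integrable (fun y : E => ‖∇ g y‖ ^ 2 * exp (-γ * ‖y‖ ^ 2 / 2)))
    (hmom : Integrable (fun y : E => ‖y‖ ^ 2 * g y ^ 2 * exp (-γ * ‖y‖ ^ 2 / 2))) :
    ∫ y : E, ‖y‖ ^ 2 * g y ^ 2 * exp (-γ * ‖y‖ ^ 2 / 2) ≤
      (2 * Module.finrank ℝ E / γ) * (∫ y : E, g y ^ 2 * exp (-γ * ‖y‖ ^ 2 / 2)) +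
      (4 / γ ^ 2) * ∫ y : E, ‖∇ g y‖ ^ 2 * exp (-γ * ‖y‖ ^ 2 / 2) := by
  let b := stdOrthonormalBasis ℝ E
  have hb i := integral_inner_sq_mul_gaussian_le hγ hg hg0 hgrad hmom (b.orthonormal.1 i)
  simp_rw [← b.sum_sq_inner_right, Finset.sum_mul] at *
  rw [integral_finsetSum _ fun i _ => (hb i).1, integral_finsetSum _ fun i _ => (hb i).2.1]
  refine (Finset.sum_le_sum fun i _ => (hb i).2.2).trans_eq ?_
  rw [Finset.sum_add_distrib, Finset.sum_const, Finset.card_univ, Fintype.card_fin,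
    nsmul_eq_mul, ← Finset.mul_sum]
  ring

lemma integral_norm_sq_mul_gaussian_le_of_lt {β γ : ℝ} (hβ : 0 < β) (hβγ : β < γ) {g : E → ℝ}
    (hg : ContDiff ℝ 1 g)
    (hg0 : Integrable (fun y : E => g y ^ 2 * exp (-β * ‖y‖ ^ 2 / 2)))
    (hgrad : Integrable (fun y : E => ‖∇ g y‖ ^ 2 * exp (-β * ‖y‖ ^ 2 / 2))) :
    Integrable (fun y : E => ‖y‖ ^ 2 * g y ^ 2 * exp (-γ * ‖y‖ ^ 2 / 2)) ∧
    ∫ y : E, ‖y‖ ^ 2 * g y ^ 2 * exp (-γ * ‖y‖ ^ 2 / 2) ≤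
      (2 * Module.finrank ℝ E / β) * (∫ y : E, g y ^ 2 * exp (-β * ‖y‖ ^ 2 / 2)) +
      (4 / β ^ 2) * ∫ y : E, ‖∇ g y‖ ^ 2 * exp (-β * ‖y‖ ^ 2 / 2) := by
  have hgc : Continuous g := hg.continuous
  have hgrc : Continuous (∇ g) :=
    (InnerProductSpace.toDual ℝ E).symm.continuous.comp (hg.continuous_fderiv one_ne_zero)
  have hexp (y : E) : exp (-γ * ‖y‖ ^ 2 / 2) ≤ exp (-β * ‖y‖ ^ 2 / 2) := by gcongr
  have hg0' : Integrable (fun y : E => g y ^ 2 * exp (-γ * ‖y‖ ^ 2 / 2)) := by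
    refine hg0.mono' (by fun_prop) (ae_of_all _ fun y => ?_)
    rw [norm_of_nonneg (by positivity)]
    exact mul_le_mul_of_nonneg_left (hexp y) (by positivity)
  have hgrad' : Integrable (fun y : E => ‖∇ g y‖ ^ 2 * exp (-γ * ‖y‖ ^ 2 / 2)) := by
    refine hgrad.mono' (by fun_prop) (ae_of_all _ fun y => ?_)
    rw [norm_of_nonneg (by positivity)]
    exact mul_le_mul_of_nonneg_left (hexp y) (by positivity)
  have hmom : Integrable (fun y : E => ‖y‖ ^ 2 * g y ^ 2 * exp (-γ * ‖y‖ ^ 2 / 2)) := by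
    refine (hg0.const_mul (2 / (γ - β))).mono' (by fun_prop) (ae_of_all _ fun y => ?_)
    rw [norm_of_nonneg (by positivity)]
    linarith [mul_le_mul_of_nonneg_left (norm_sq_mul_gaussian_le hβγ y) (sq_nonneg (g y))]
  refine ⟨hmom, (integral_norm_sq_mul_gaussian_le (hβ.trans hβγ) hg hg0' hgrad' hmom).trans ?_⟩
  gcongr ?_ * ?_ + ?_ * ?_
  · gcongr
  · exact integral_mono hg0' hg0 fun y => mul_le_mul_of_nonneg_left (hexp y) (by positivity)
  · gcongr
  · exact integral_mono hgrad' hgrad fun y => mul_le_mul_of_nonneg_left (hexp y) (by positivity)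

lemma lintegral_norm_sq_mul_gaussian_le {β : ℝ} (hβ : 0 < β) {g : E → ℝ} (hg : ContDiff ℝ 1 g)
    (hg0 : Integrable (fun y : E => g y ^ 2 * exp (-β * ‖y‖ ^ 2 / 2)))
    (hgrad : Integrable (fun y : E => ‖∇ g y‖ ^ 2 * exp (-β * ‖y‖ ^ 2 / 2))) :
    ∫⁻ y : E, ENNReal.ofReal (‖y‖ ^ 2 * g y ^ 2 * exp (-β * ‖y‖ ^ 2 / 2)) ≤
      ENNReal.ofReal
        ((2 * Module.finrank ℝ E / β) * (∫ y : E, g y ^ 2 * exp (-β * ‖y‖ ^ 2 / 2)) +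
        (4 / β ^ 2) * ∫ y : E, ‖∇ g y‖ ^ 2 * exp (-β * ‖y‖ ^ 2 / 2)) := by
  have hgc : Continuous g := hg.continuous
  let γ : ℕ → ℝ := fun n => β + 1 / ((n : ℝ) + 1)
  have hγ : Tendsto γ atTop (𝓝 β) := by
    simpa [γ] using tendsto_one_div_add_atTop_nhds_zero_nat.const_add β
  have hlt (n : ℕ) : β < γ n := lt_add_of_pos_right β (by positivity)
  refine le_of_tendsto' (lintegral_tendsto_of_tendsto_of_monotone
    (f := fun n (y : E) => ENNReal.ofReal (‖y‖ ^ 2 * g y ^ 2 * exp (-γ n * ‖y‖ ^ 2 / 2)))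
    (fun n => by fun_prop) (ae_of_all _ fun y m n hmn => ?_) (ae_of_all _ fun y => ?_)) fun n => ?_
  · have : γ n ≤ γ m := by simp only [γ]; gcongr
    dsimp only
    gcongr
  · refine (ENNReal.continuous_ofReal.tendsto _).comp ?_
    exact ((continuous_exp.tendsto _).comp ((hγ.neg.mul_const _).div_const _)).const_mul _
  · obtain ⟨hint, hle⟩ := integral_norm_sq_mul_gaussian_le_of_lt hβ (hlt n) hg hg0 hgrad
    rw [← ofReal_integral_eq_lintegral_ofReal hint (ae_of_all _ fun y => by positivity)]
    exact ENNReal.ofReal_le_ofReal hle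

end GaussianMoment

theorem stmt_1 (d : ℕ) (hd : 1 ≤ d) (β : ℝ) (hβ : 1 ≤ β)
    (g : EuclideanSpace ℝ (Fin d) → ℝ) (hg : ContDiff ℝ 1 g)
    (h1 : Integrable (fun y : EuclideanSpace ℝ (Fin d) =>
      g y ^ 2 * Real.exp (-β * ‖y‖ ^ 2 / 2)))
    (h2 : Integrable (fun y : EuclideanSpace ℝ (Fin d) =>
      ‖gradient g y‖ ^ 2 * Real.exp (-β * ‖y‖ ^ 2 / 2))) :
    ∫⁻ y : EuclideanSpace ℝ (Fin d),
        ENNReal.ofReal (‖y‖ ^ 2 * g y ^ 2 * Real.exp (-β * ‖y‖ ^ 2 / 2))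
      ≤ ENNReal.ofReal ((2 * d / β) *
          ∫ y : EuclideanSpace ℝ (Fin d), g y ^ 2 * Real.exp (-β * ‖y‖ ^ 2 / 2))
        + ENNReal.ofReal ((4 / β ^ 2) *
          ∫ y : EuclideanSpace ℝ (Fin d), ‖gradient g y‖ ^ 2 * Real.exp (-β * ‖y‖ ^ 2 / 2)) := by
  have hβ0 : 0 < β := zero_lt_one.trans_le hβ
  have h := lintegral_norm_sq_mul_gaussian_le hβ0 hg h1 h2
  rw [finrank_euclideanSpace_fin] at h
  exact h.trans ENNReal.ofReal_add_le
end

section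
/- Let d ≥ 1 and let U : ℝ^d → ℝ be smooth with bounded Hessian; set c₂ = sup_{x∈ℝ^d} ‖∇²U(x)‖ (operator norm). Let β, γ > 0. Define the operator L* acting on smooth functions h : ℝ^d × ℝ^d → ℝ (variables (x,y)) by L*h = −y·∇_x h + (∇U(x) − γ y)·∇_y h + (γ/β) Δ_y h, and the carré du champ Γ(g) = (γ/β)|∇_y g|². For σ ≥ 1/2 + (β/γ)(1 + c₂ + γ)², define φ(h) = |(∇_x+∇_y)h|² + σ h² (where (∇_x+∇_y)h is the ℝ^d-valued function with components ∂_{x_i}h + ∂_{y_i}h) and Γ_φ(h) = L*(φ(h)) − 2 (∇_x+∇_y)h · (∇_x+∇_y)(L*h) − 2σ h L*h. Then for every smooth h : ℝ^{2d} → ℝ and every point z ∈ ℝ^{2d}: Γ_φ(h)(z) ≥ (1/2)|∇h(z)|² + (γ/β) Σ_{i=1}^d Σ_{j=1}^d (∂_{y_j}(∂_{x_i}h + ∂_{y_i}h)(z))². -/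
open Real

/-- Partial derivative in the `i`-th position coordinate of a function on `ℝ^d × ℝ^d`. -/
noncomputable def Dx {d : ℕ} (i : Fin d)
    (h : EuclideanSpace ℝ (Fin d) × EuclideanSpace ℝ (Fin d) → ℝ)
    (z : EuclideanSpace ℝ (Fin d) × EuclideanSpace ℝ (Fin d)) : ℝ :=
  fderiv ℝ h z (EuclideanSpace.single i 1, 0)

/-- Partial derivative in the `i`-th velocity coordinate of a function on `ℝ^d × ℝ^d`. -/
noncomputable def Dy {d : ℕ} (i : Fin d)
    (h : EuclideanSpace ℝ (Fin d) × EuclideanSpace ℝ (Fin d) → ℝ)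
    (z : EuclideanSpace ℝ (Fin d) × EuclideanSpace ℝ (Fin d)) : ℝ :=
  fderiv ℝ h z (0, EuclideanSpace.single i 1)

/-- The adjoint generator `L* h = -y·∇ₓh + (∇U(x) - γ y)·∇_y h + (γ/β) Δ_y h`. -/
noncomputable def Lstar {d : ℕ} (U : EuclideanSpace ℝ (Fin d) → ℝ) (β γ : ℝ)
    (h : EuclideanSpace ℝ (Fin d) × EuclideanSpace ℝ (Fin d) → ℝ)
    (z : EuclideanSpace ℝ (Fin d) × EuclideanSpace ℝ (Fin d)) : ℝ :=
  (- ∑ i, z.2 i * Dx i h z)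
    + (∑ i, (fderiv ℝ U z.1 (EuclideanSpace.single i 1) - γ * z.2 i) * Dy i h z)
    + (γ / β) * ∑ i, Dy i (Dy i h) z

/-- `φ(h) = |(∇ₓ+∇_y)h|² + σ h²`. -/
noncomputable def phiFn {d : ℕ} (σ : ℝ)
    (h : EuclideanSpace ℝ (Fin d) × EuclideanSpace ℝ (Fin d) → ℝ)
    (z : EuclideanSpace ℝ (Fin d) × EuclideanSpace ℝ (Fin d)) : ℝ :=
  (∑ i, (Dx i h z + Dy i h z) ^ 2) + σ * (h z) ^ 2

/-- `Γ_φ(h) = L*(φ(h)) - D_hφ(h)(L*h)`. -/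
noncomputable def GammaPhi {d : ℕ} (U : EuclideanSpace ℝ (Fin d) → ℝ) (β γ σ : ℝ)
    (h : EuclideanSpace ℝ (Fin d) × EuclideanSpace ℝ (Fin d) → ℝ)
    (z : EuclideanSpace ℝ (Fin d) × EuclideanSpace ℝ (Fin d)) : ℝ :=
  Lstar U β γ (phiFn σ h) z
    - 2 * (∑ i, (Dx i h z + Dy i h z) * (Dx i (Lstar U β γ h) z + Dy i (Lstar U β γ h) z))
    - 2 * σ * h z * Lstar U β γ h z

/-- The directional derivative of a function along a constant vector field. -/
noncomputable def dirDeriv {E : Type*} [NormedAddCommGroup E] [NormedSpace ℝ E] (v : E)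
    (f : E → ℝ) (z : E) : ℝ :=
  fderiv ℝ f z v

section DirDeriv

variable {E : Type*} [NormedAddCommGroup E] [NormedSpace ℝ E] {f g : E → ℝ} {z : E}

lemma ContDiff.dirDeriv (hf : ContDiff ℝ (⊤ : ℕ∞) f) (v : E) :
    ContDiff ℝ (⊤ : ℕ∞) (dirDeriv v f) :=
  (hf.fderiv_right (m := (⊤ : ℕ∞)) (by simp)).clm_apply contDiff_const

lemma dirDeriv_add (v : E) (hf : DifferentiableAt ℝ f z) (hg : DifferentiableAt ℝ g z) :
    dirDeriv v (fun w => f w + g w) z = dirDeriv v f z + dirDeriv v g z := by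
  simp [dirDeriv, fderiv_fun_add hf hg]

lemma dirDeriv_neg (v : E) : dirDeriv v (fun w => -f w) z = -dirDeriv v f z := by
  simp [dirDeriv, fderiv_fun_neg]

lemma dirDeriv_mul (v : E) (hf : DifferentiableAt ℝ f z) (hg : DifferentiableAt ℝ g z) :
    dirDeriv v (fun w => f w * g w) z = dirDeriv v f z * g z + f z * dirDeriv v g z := by
  simp [dirDeriv, fderiv_fun_mul hf hg]
  ring

lemma dirDeriv_const_mul (v : E) (c : ℝ) (hf : DifferentiableAt ℝ f z) :
    dirDeriv v (fun w => c * f w) z = c * dirDeriv v f z := by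
  simp [dirDeriv, fderiv_const_mul hf]

lemma dirDeriv_sum {ι : Type*} (s : Finset ι) (v : E) {F : ι → E → ℝ}
    (hF : ∀ i ∈ s, DifferentiableAt ℝ (F i) z) :
    dirDeriv v (fun w => ∑ i ∈ s, F i w) z = ∑ i ∈ s, dirDeriv v (F i) z := by
  simp [dirDeriv, fderiv_fun_sum hF]

/-- Directional derivatives of a smooth function commute. -/
lemma dirDeriv_comm (hf : ContDiff ℝ (⊤ : ℕ∞) f) (u v : E) :
    dirDeriv u (dirDeriv v f) = dirDeriv v (dirDeriv u f) := by
  funext z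
  have hd : DifferentiableAt ℝ (fderiv ℝ f) z :=
    (hf.fderiv_right (m := (⊤ : ℕ∞)) (by simp)).differentiable (by simp) z
  have key : ∀ a b : E, dirDeriv a (dirDeriv b f) z = fderiv ℝ (fderiv ℝ f) z a b := by
    intro a b
    change fderiv ℝ (fun w => fderiv ℝ f w b) z a = _
    simp [fderiv_clm_apply hd (differentiableAt_const b)]
  rw [key, key]
  exact (hf.contDiffAt.isSymmSndFDerivAt (by simpa using WithTop.coe_le_coe.2 (le_top (a := (2 : ℕ∞))))) u v

end DirDeriv

section Langevin

variable {d : ℕ} {U : EuclideanSpace ℝ (Fin d) → ℝ}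
  {f g h : EuclideanSpace ℝ (Fin d) × EuclideanSpace ℝ (Fin d) → ℝ}

lemma Dx_eq_dirDeriv (i : Fin d) : Dx i h = dirDeriv (EuclideanSpace.single i 1, 0) h := rfl

lemma Dy_eq_dirDeriv (i : Fin d) : Dy i h = dirDeriv (0, EuclideanSpace.single i 1) h := rfl

lemma Dx_add_Dy (i : Fin d) (z : EuclideanSpace ℝ (Fin d) × EuclideanSpace ℝ (Fin d)) :
    Dx i h z + Dy i h z =
      dirDeriv (EuclideanSpace.single i 1, EuclideanSpace.single i 1) h z := by
  simp only [Dx, Dy, dirDeriv, ← map_add]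
  simp

lemma Lstar_add (β γ : ℝ) (hf : ContDiff ℝ (⊤ : ℕ∞) f) (hg : ContDiff ℝ (⊤ : ℕ∞) g)
    (z : EuclideanSpace ℝ (Fin d) × EuclideanSpace ℝ (Fin d)) :
    Lstar U β γ (fun w => f w + g w) z = Lstar U β γ f z + Lstar U β γ g z := by
  have key : ∀ v, dirDeriv v (fun w => f w + g w) = fun w => dirDeriv v f w + dirDeriv v g w :=
    fun v => funext fun w => dirDeriv_add v (hf.differentiable (by simp) w)
      (hg.differentiable (by simp) w)
  have key₂ : ∀ u v, dirDeriv u (fun w => dirDeriv v f w + dirDeriv v g w) z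
      = dirDeriv u (dirDeriv v f) z + dirDeriv u (dirDeriv v g) z :=
    fun u v => dirDeriv_add u ((hf.dirDeriv v).differentiable (by simp) z)
      ((hg.dirDeriv v).differentiable (by simp) z)
  simp only [Lstar, Dx_eq_dirDeriv, Dy_eq_dirDeriv, key, key₂, mul_add, Finset.sum_add_distrib]
  ring

lemma Lstar_const_mul (β γ c : ℝ) (hf : ContDiff ℝ (⊤ : ℕ∞) f)
    (z : EuclideanSpace ℝ (Fin d) × EuclideanSpace ℝ (Fin d)) :
    Lstar U β γ (fun w => c * f w) z = c * Lstar U β γ f z := by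
  have key : ∀ v, dirDeriv v (fun w => c * f w) = fun w => c * dirDeriv v f w :=
    fun v => funext fun w => dirDeriv_const_mul v c (hf.differentiable (by simp) w)
  have key₂ : ∀ u v, dirDeriv u (fun w => c * dirDeriv v f w) z
      = c * dirDeriv u (dirDeriv v f) z :=
    fun u v => dirDeriv_const_mul u c ((hf.dirDeriv v).differentiable (by simp) z)
  simp only [Lstar, Dx_eq_dirDeriv, Dy_eq_dirDeriv, key, key₂, mul_left_comm _ c,
    ← Finset.mul_sum]
  ring

lemma Lstar_sum {ι : Type*} (β γ : ℝ) (s : Finset ι)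
    {F : ι → EuclideanSpace ℝ (Fin d) × EuclideanSpace ℝ (Fin d) → ℝ}
    (hF : ∀ i, ContDiff ℝ (⊤ : ℕ∞) (F i))
    (z : EuclideanSpace ℝ (Fin d) × EuclideanSpace ℝ (Fin d)) :
    Lstar U β γ (fun w => ∑ i ∈ s, F i w) z = ∑ i ∈ s, Lstar U β γ (F i) z := by
  classical
  induction s using Finset.induction_on with
  | empty => simpa using Lstar_const_mul (U := U) β γ 0 (contDiff_const (c := (0 : ℝ))) z
  | insert a s ha ih =>
    simp only [Finset.sum_insert ha]
    rw [Lstar_add β γ (hF a) (ContDiff.sum fun i _ => hF i), ih]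

/-- The carré du champ identity for `L*`. -/
lemma Lstar_sq (β γ : ℝ) (hf : ContDiff ℝ (⊤ : ℕ∞) f)
    (z : EuclideanSpace ℝ (Fin d) × EuclideanSpace ℝ (Fin d)) :
    Lstar U β γ (fun w => f w ^ 2) z =
      2 * f z * Lstar U β γ f z + 2 * (γ / β) * ∑ j, (Dy j f z) ^ 2 := by
  have hd : ∀ w, DifferentiableAt ℝ f w := hf.differentiable (by simp)
  have key : ∀ v, dirDeriv v (fun w => f w ^ 2) = fun w => 2 * (f w * dirDeriv v f w) := by
    intro v
    funext w
    simp only [pow_two, dirDeriv_mul v (hd w) (hd w)]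
    ring
  have key₂ : ∀ v, dirDeriv v (fun w => 2 * (f w * dirDeriv v f w)) z
      = 2 * f z * dirDeriv v (dirDeriv v f) z + 2 * dirDeriv v f z ^ 2 := by
    intro v
    have hv : DifferentiableAt ℝ (dirDeriv v f) z := (hf.dirDeriv v).differentiable (by simp) z
    rw [dirDeriv_const_mul v 2 ((hd z).fun_mul hv), dirDeriv_mul v (hd z) hv]
    ring
  simp only [Lstar, Dx_eq_dirDeriv, Dy_eq_dirDeriv, key, key₂, mul_add, mul_neg, Finset.mul_sum,
    ← Finset.sum_neg_distrib, ← Finset.sum_add_distrib]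
  exact Finset.sum_congr rfl fun i _ => by ring

/-- The commutator of `L*` with a directional derivative. -/
lemma dirDeriv_Lstar (hU : ContDiff ℝ (⊤ : ℕ∞) U) (β γ : ℝ) (hh : ContDiff ℝ (⊤ : ℕ∞) h)
    (v z : EuclideanSpace ℝ (Fin d) × EuclideanSpace ℝ (Fin d)) :
    dirDeriv v (Lstar U β γ h) z = Lstar U β γ (dirDeriv v h) z
      - (∑ j, v.2 j * Dx j h z)
      + ∑ j, (fderiv ℝ (fderiv ℝ U) z.1 v.1 (EuclideanSpace.single j 1) - γ * v.2 j)
          * Dy j h z := by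
  have hD : ∀ u, DifferentiableAt ℝ (dirDeriv u h) z :=
    fun u => (hh.dirDeriv u).differentiable (by simp) z
  have hD₂ : ∀ u, DifferentiableAt ℝ (dirDeriv u (dirDeriv u h)) z :=
    fun u => ((hh.dirDeriv u).dirDeriv u).differentiable (by simp) z
  have hdU : Differentiable ℝ (fderiv ℝ U) :=
    (hU.fderiv_right (m := (⊤ : ℕ∞)) (by simp)).differentiable (by simp)
  have hy : ∀ j : Fin d, HasFDerivAt
      (fun w : EuclideanSpace ℝ (Fin d) × EuclideanSpace ℝ (Fin d) => w.2 j)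
      ((EuclideanSpace.proj j : EuclideanSpace ℝ (Fin d) →L[ℝ] ℝ).comp
        (ContinuousLinearMap.snd ℝ _ _)) z := fun j =>
    ((EuclideanSpace.proj j : EuclideanSpace ℝ (Fin d) →L[ℝ] ℝ).comp
        (ContinuousLinearMap.snd ℝ (EuclideanSpace ℝ (Fin d)) _)).hasFDerivAt
  have hb : ∀ j : Fin d, HasFDerivAt
      (fun w : EuclideanSpace ℝ (Fin d) × EuclideanSpace ℝ (Fin d) =>
        fderiv ℝ U w.1 (EuclideanSpace.single j 1) - γ * w.2 j)
      (((fderiv ℝ (fderiv ℝ U) z.1).flip (EuclideanSpace.single j (1 : ℝ))).comp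
          (ContinuousLinearMap.fst ℝ _ _) -
        γ • ((EuclideanSpace.proj j : EuclideanSpace ℝ (Fin d) →L[ℝ] ℝ).comp
        (ContinuousLinearMap.snd ℝ _ _))) z := by
    intro j
    refine HasFDerivAt.sub ?_ ((hy j).const_mul γ)
    have h₁ : HasFDerivAt (fun x => fderiv ℝ U x (EuclideanSpace.single j (1 : ℝ)))
        ((fderiv ℝ (fderiv ℝ U) z.1).flip (EuclideanSpace.single j (1 : ℝ))) z.1 := by
      simpa using (hdU z.1).hasFDerivAt.clm_apply
        (hasFDerivAt_const (EuclideanSpace.single j (1 : ℝ)) z.1)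
    exact h₁.comp z hasFDerivAt_fst
  have hyd : ∀ j : Fin d, dirDeriv v (fun w => w.2 j) z = v.2 j := fun j => by
    simp [dirDeriv, (hy j).fderiv]
  have hbd : ∀ j : Fin d, dirDeriv v
      (fun w => fderiv ℝ U w.1 (EuclideanSpace.single j 1) - γ * w.2 j) z
      = fderiv ℝ (fderiv ℝ U) z.1 v.1 (EuclideanSpace.single j 1) - γ * v.2 j := fun j => by
    simp [dirDeriv, (hb j).fderiv]
  have h₁ : ∀ j ∈ Finset.univ, DifferentiableAt ℝ (fun w => w.2 j * Dx j h w) z :=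
    fun j _ => (hy j).differentiableAt.mul (hD _)
  have h₂ : ∀ j ∈ Finset.univ, DifferentiableAt ℝ
      (fun w => (fderiv ℝ U w.1 (EuclideanSpace.single j 1) - γ * w.2 j) * Dy j h w) z :=
    fun j _ => (hb j).differentiableAt.mul (hD _)
  have h₃ : ∀ j ∈ Finset.univ, DifferentiableAt ℝ (Dy j (Dy j h)) z := fun j _ => hD₂ _
  have hL : dirDeriv v (Lstar U β γ h) z =
      -(∑ j, (v.2 j * Dx j h z + z.2 j * dirDeriv v (Dx j h) z))
      + (∑ j, ((fderiv ℝ (fderiv ℝ U) z.1 v.1 (EuclideanSpace.single j 1) - γ * v.2 j) * Dy j h z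
        + (fderiv ℝ U z.1 (EuclideanSpace.single j 1) - γ * z.2 j) * dirDeriv v (Dy j h) z))
      + (γ / β) * ∑ j, dirDeriv v (Dy j (Dy j h)) z := by
    have e₁ := DifferentiableAt.fun_sum h₁
    have e₂ := DifferentiableAt.fun_sum h₂
    have e₃ := DifferentiableAt.fun_sum h₃
    unfold Lstar
    rw [dirDeriv_add v (e₁.fun_neg.fun_add e₂) (e₃.const_mul _), dirDeriv_add v e₁.fun_neg e₂,
      dirDeriv_neg, dirDeriv_const_mul v _ e₃, dirDeriv_sum _ v h₁, dirDeriv_sum _ v h₂,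
      dirDeriv_sum _ v h₃]
    congr 3
    · refine Finset.sum_congr rfl fun j _ => ?_
      rw [dirDeriv_mul v (hy j).differentiableAt (g := Dx j h) (hD _), hyd]
    · funext j
      rw [dirDeriv_mul v (hb j).differentiableAt (g := Dy j h) (hD _), hbd]
  have hx : ∀ j, dirDeriv v (Dx j h) z = Dx j (dirDeriv v h) z := fun j => by
    rw [Dx_eq_dirDeriv, dirDeriv_comm hh]
    rfl
  have hy₁ : ∀ j, dirDeriv v (Dy j h) = Dy j (dirDeriv v h) := fun j => by
    rw [Dy_eq_dirDeriv, dirDeriv_comm hh]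
    rfl
  have hy₂ : ∀ j, dirDeriv v (Dy j (Dy j h)) z = Dy j (Dy j (dirDeriv v h)) z := fun j => by
    rw [← hy₁, Dy_eq_dirDeriv, Dy_eq_dirDeriv, dirDeriv_comm (hh.dirDeriv _)]
    rfl
  rw [hL]
  simp only [hx, hy₁, hy₂, Finset.sum_add_distrib, Lstar]
  ring

lemma GammaPhi_eq (hU : ContDiff ℝ (⊤ : ℕ∞) U) (β γ σ : ℝ) (hh : ContDiff ℝ (⊤ : ℕ∞) h)
    (z : EuclideanSpace ℝ (Fin d) × EuclideanSpace ℝ (Fin d)) :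
    GammaPhi U β γ σ h z =
      2 * (γ / β) * (∑ i, ∑ j, (Dy j (fun w => Dx i h w + Dy i h w) z) ^ 2)
      + 2 * σ * (γ / β) * (∑ j, (Dy j h z) ^ 2)
      + 2 * ∑ i, (Dx i h z + Dy i h z) * (Dx i h z + γ * Dy i h z
        - ∑ j, fderiv ℝ (fderiv ℝ U) z.1 (EuclideanSpace.single i 1)
            (EuclideanSpace.single j 1) * Dy j h z) := by
  have hA : ∀ i : Fin d, ContDiff ℝ (⊤ : ℕ∞)
      (dirDeriv (EuclideanSpace.single i 1, EuclideanSpace.single i 1) h) :=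
    fun i => hh.dirDeriv _
  have hcomm : ∀ i : Fin d,
      Dx i (Lstar U β γ h) z + Dy i (Lstar U β γ h) z =
        Lstar U β γ (dirDeriv (EuclideanSpace.single i 1, EuclideanSpace.single i 1) h) z
        - (Dx i h z + γ * Dy i h z
        - ∑ j, fderiv ℝ (fderiv ℝ U) z.1 (EuclideanSpace.single i 1)
            (EuclideanSpace.single j 1) * Dy j h z) := by
    intro i
    rw [Dx_add_Dy, dirDeriv_Lstar hU β γ hh]
    have e₁ : ∑ j, (EuclideanSpace.single i (1 : ℝ)) j * Dx j h z = Dx i h z := by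
      simp [PiLp.single_apply]
    have e₂ : ∑ j, γ * (EuclideanSpace.single i (1 : ℝ)) j * Dy j h z = γ * Dy i h z := by
      simp [PiLp.single_apply]
    simp only [sub_mul, Finset.sum_sub_distrib, e₁, e₂]
    ring
  unfold GammaPhi
  simp only [hcomm]
  have hφ : phiFn σ h = fun w =>
      (∑ i, (dirDeriv (EuclideanSpace.single i 1, EuclideanSpace.single i 1) h w) ^ 2)
        + σ * (h w) ^ 2 := by
    funext w
    simp only [phiFn, Dx_add_Dy]
  rw [hφ, Lstar_add β γ (ContDiff.sum fun i _ => (hA i).pow 2) (contDiff_const.mul (hh.pow 2)),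
    Lstar_const_mul β γ σ (hh.pow 2), Lstar_sq β γ hh,
    Lstar_sum β γ _ (fun i => (hA i).pow 2)]
  simp only [Lstar_sq β γ (hA _), Finset.sum_add_distrib, mul_sub, Finset.sum_sub_distrib,
    Dx_add_Dy, mul_assoc, ← Finset.mul_sum]
  ring

end Langevin

lemma sum_hessian_le {d : ℕ} {U : EuclideanSpace ℝ (Fin d) → ℝ} {c : ℝ}
    {x : EuclideanSpace ℝ (Fin d)} (hc : ‖iteratedFDeriv ℝ 2 U x‖ ≤ c)
    (a b : EuclideanSpace ℝ (Fin d)) :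
    ∑ i, a i * ∑ j, fderiv ℝ (fderiv ℝ U) x (EuclideanSpace.single i 1)
      (EuclideanSpace.single j 1) * b j ≤ c * ‖a‖ * ‖b‖ := by
  have hsum : ∀ v : EuclideanSpace ℝ (Fin d), v = ∑ i, v i • EuclideanSpace.single i (1 : ℝ) := by
    intro v
    ext k
    simp [Pi.single_apply]
  have hval : ∑ i, a i * ∑ j, fderiv ℝ (fderiv ℝ U) x (EuclideanSpace.single i 1)
      (EuclideanSpace.single j 1) * b j = iteratedFDeriv ℝ 2 U x ![a, b] := by
    rw [iteratedFDeriv_two_apply]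
    simp only [Matrix.cons_val_zero, Matrix.cons_val_one]
    conv_rhs => rw [hsum a, hsum b]
    simp only [map_sum, map_smul, FunLike.coe_sum, FunLike.coe_smul, Finset.sum_apply,
      Pi.smul_apply, smul_eq_mul, Finset.mul_sum]
    rw [Finset.sum_comm]
    exact Finset.sum_congr rfl fun i _ => Finset.sum_congr rfl fun j _ => by ring
  rw [hval]
  calc iteratedFDeriv ℝ 2 U x ![a, b] ≤ ‖iteratedFDeriv ℝ 2 U x ![a, b]‖ := le_norm_self _
    _ ≤ ‖iteratedFDeriv ℝ 2 U x‖ * ∏ i, ‖![a, b] i‖ := ContinuousMultilinearMap.le_opNorm _ _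
    _ = ‖iteratedFDeriv ℝ 2 U x‖ * (‖a‖ * ‖b‖) := by simp [Fin.prod_univ_two]
    _ ≤ c * (‖a‖ * ‖b‖) := by gcongr
    _ = c * ‖a‖ * ‖b‖ := by ring

/-- Coercivity of the quadratic form produced by the commutator term. -/
lemma hypocoercive_quadratic_bound {P Q s t c γ r : ℝ} (hc : 0 ≤ c) (hγ : 0 < γ)
    (hr : (1 + c + γ) ^ 2 ≤ r) (hs : -(P * Q) ≤ s) (ht : t ≤ c * P * Q + c * Q ^ 2) :
    1 / 2 * (P ^ 2 + Q ^ 2) ≤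
      2 * r * Q ^ 2 + 2 * (P ^ 2 + (1 + γ) * s + γ * Q ^ 2 - t) := by
  have h₁ : (1 + c + γ) ^ 2 * Q ^ 2 ≤ r * Q ^ 2 := by gcongr
  have h₂ : (1 + γ) * -(P * Q) ≤ (1 + γ) * s := by gcongr
  have h₃ : 0 ≤ (P * 3 - 2 * (1 + c + γ) * Q) ^ 2 := sq_nonneg _
  have h₄ : 0 ≤ (4 / 3 * (1 + c + γ) ^ 2 + 2 * γ - 2 * c - 1 / 2) * Q ^ 2 := by
    refine mul_nonneg ?_ (sq_nonneg _)
    nlinarith [mul_nonneg hc hγ.le, sq_nonneg c, sq_nonneg γ]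
  linarith

theorem stmt_2 (d : ℕ) (hd : 1 ≤ d) (U : EuclideanSpace ℝ (Fin d) → ℝ)
    (hU : ContDiff ℝ (⊤ : ℕ∞) U)
    (c₂ : ℝ) (hc₂ : ∀ x, ‖iteratedFDeriv ℝ 2 U x‖ ≤ c₂)
    (β γ : ℝ) (hβ : 0 < β) (hγ : 0 < γ)
    (σ : ℝ) (hσ : 1/2 + (β/γ) * (1 + c₂ + γ)^2 ≤ σ)
    (h : EuclideanSpace ℝ (Fin d) × EuclideanSpace ℝ (Fin d) → ℝ)
    (hh : ContDiff ℝ (⊤ : ℕ∞) h)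
    (z : EuclideanSpace ℝ (Fin d) × EuclideanSpace ℝ (Fin d)) :
    (1/2) * ((∑ i, (Dx i h z) ^ 2) + ∑ i, (Dy i h z) ^ 2)
      + (γ/β) * ∑ i, ∑ j, (Dy j (fun w => Dx i h w + Dy i h w) z) ^ 2
    ≤ GammaPhi U β γ σ h z := by
  set p : EuclideanSpace ℝ (Fin d) := WithLp.toLp 2 fun i => Dx i h z with hp
  set q : EuclideanSpace ℝ (Fin d) := WithLp.toLp 2 fun i => Dy i h z with hq
  have hc : 0 ≤ c₂ := (norm_nonneg _).trans (hc₂ z.1)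
  have hP : ∑ i, (Dx i h z) ^ 2 = ‖p‖ ^ 2 := by simp [EuclideanSpace.real_norm_sq_eq, hp]
  have hQ : ∑ i, (Dy i h z) ^ 2 = ‖q‖ ^ 2 := by simp [EuclideanSpace.real_norm_sq_eq, hq]
  have hS : ∑ i, Dx i h z * Dy i h z = inner ℝ p q := by
    simp [PiLp.inner_apply, hp, hq, mul_comm]
  have hs : -(‖p‖ * ‖q‖) ≤ inner ℝ p q := neg_le_of_abs_le (abs_real_inner_le_norm p q)
  set t := ∑ i, (Dx i h z + Dy i h z) * ∑ j, fderiv ℝ (fderiv ℝ U) z.1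
    (EuclideanSpace.single i 1) (EuclideanSpace.single j 1) * Dy j h z with ht_def
  have ht : t ≤ c₂ * ‖p‖ * ‖q‖ + c₂ * ‖q‖ ^ 2 := by
    have h₁ := sum_hessian_le (hc₂ z.1) p q
    have h₂ := sum_hessian_le (hc₂ z.1) q q
    simp only [ht_def, add_mul, Finset.sum_add_distrib]
    simp only [hp, hq] at h₁ h₂ ⊢
    linarith
  have hr : (1 + c₂ + γ) ^ 2 ≤ σ * (γ / β) := by
    calc (1 + c₂ + γ) ^ 2 = (β / γ) * (1 + c₂ + γ) ^ 2 * (γ / β) := by field_simp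
      _ ≤ σ * (γ / β) := by gcongr; linarith
  have hquad := hypocoercive_quadratic_bound hc hγ hr hs ht
  have hcomm : ∑ i, (Dx i h z + Dy i h z) * (Dx i h z + γ * Dy i h z
        - ∑ j, fderiv ℝ (fderiv ℝ U) z.1 (EuclideanSpace.single i 1)
            (EuclideanSpace.single j 1) * Dy j h z)
      = ‖p‖ ^ 2 + (1 + γ) * inner ℝ p q + γ * ‖q‖ ^ 2 - t := by
    rw [← hP, ← hQ, ← hS, ht_def, Finset.mul_sum, Finset.mul_sum, ← Finset.sum_add_distrib,
      ← Finset.sum_add_distrib, ← Finset.sum_sub_distrib]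
    exact Finset.sum_congr rfl fun i _ => by ring
  have hpos : 0 ≤ (γ / β) * ∑ i, ∑ j, (Dy j (fun w => Dx i h w + Dy i h w) z) ^ 2 := by
    positivity
  rw [GammaPhi_eq hU β γ σ hh z, hcomm, hP, hQ]
  linarith
end

section
/- Let d ≥ 1, K > 0, L > √(2K) + 2 and G ≥ 0. There exist real numbers m, n with √(2K) < n < m < L, a constant σ_* > 0, and C^∞ functions W : ℝ^d → [0,∞) and σ : ℝ^d → [0,∞), both 2L-periodic in each coordinate, such that: (i) W(y) = |y|²/2 for all y ∈ [−m, m]^d; (ii) every local minimum point of W belongs to 2Lℤ^d (so that, viewed on the torus (ℝ/2Lℤ)^d, W has a unique local minimum, which is global, attained at 0); (iii) σ(y) = σ_* for all y ∈ [−L, L]^d \ [−m, m]^d; (iv) σ(y) = 0 for all y ∈ [−n, n]^d; (v) G · sup_y |∇σ(y)| ≤ 1/2 and |∇σ(y)|² ≤ σ(y) for all y ∈ ℝ^d. -/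
open Real Set

/-- A smooth `2 * L`-periodic cutoff, equal to `1` on `[-a, a]` and to `0` on
`[-L, L] \ (-b, b)` when `0 < a < b < L`. -/
noncomputable def periodicCutoff (L a b t : ℝ) : ℝ :=
  smoothTransition ((cos (π / L * t) - cos (π / L * b)) / (cos (π / L * a) - cos (π / L * b)))

/-- A smooth `2 * L`-periodic potential, equal to `t ^ 2 / 2` on `[-a, a]`. -/
noncomputable def periodicPotential (L a b t : ℝ) : ℝ :=
  periodicCutoff L a b t * ((2 * L / π * arctan (tan (π / (2 * L) * t))) ^ 2 / 2) +
    (1 - periodicCutoff L a b t) * (L ^ 2 / 4 * (1 - cos (π / L * t)))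

lemma cos_mul_le_cos_mul {L s t : ℝ} (hL : 0 < L) (hst : |s| ≤ |t|) (ht : |t| ≤ L) :
    cos (π / L * t) ≤ cos (π / L * s) := by
  have hp : 0 < π / L := div_pos pi_pos hL
  rw [← cos_abs (π / L * t), ← cos_abs (π / L * s), abs_mul, abs_mul, abs_of_pos hp]
  refine cos_le_cos_of_nonneg_of_le_pi (by positivity) ?_ (by gcongr)
  calc π / L * |t| ≤ π / L * L := by gcongr
    _ = π := by field_simp

lemma cos_mul_lt_cos_mul {L s t : ℝ} (hL : 0 < L) (hst : |s| < |t|) (ht : |t| ≤ L) :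
    cos (π / L * t) < cos (π / L * s) := by
  have hp : 0 < π / L := div_pos pi_pos hL
  rw [← cos_abs (π / L * t), ← cos_abs (π / L * s), abs_mul, abs_mul, abs_of_pos hp]
  refine cos_lt_cos_of_nonneg_of_le_pi (by positivity) ?_ (by gcongr)
  calc π / L * |t| ≤ π / L * L := by gcongr
    _ = π := by field_simp

section periodicCutoff

variable {L a b s t : ℝ}

lemma periodicCutoff_denom_pos (ha : 0 < a) (hab : a < b) (hbL : b < L) :
    0 < cos (π / L * a) - cos (π / L * b) := by
  have hb : 0 < b := ha.trans hab
  refine sub_pos.2 (cos_mul_lt_cos_mul (hb.trans hbL) ?_ ?_)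
  · rwa [abs_of_pos ha, abs_of_pos hb]
  · rw [abs_of_pos hb]; exact hbL.le

lemma contDiff_periodicCutoff : ContDiff ℝ (⊤ : ℕ∞) (periodicCutoff L a b) := by
  unfold periodicCutoff
  exact smoothTransition.contDiff.comp (by fun_prop)

lemma periodicCutoff_nonneg : 0 ≤ periodicCutoff L a b t := smoothTransition.nonneg _

lemma periodicCutoff_le_one : periodicCutoff L a b t ≤ 1 := smoothTransition.le_one _

lemma periodicCutoff_periodic (hL : L ≠ 0) :
    Function.Periodic (periodicCutoff L a b) (2 * L) := by
  intro t
  have h : π / L * (t + 2 * L) = π / L * t + 2 * π := by field_simp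
  simp only [periodicCutoff, h, cos_add_two_pi]

lemma periodicCutoff_eq_one (ha : 0 < a) (hab : a < b) (hbL : b < L) (ht : |t| ≤ a) :
    periodicCutoff L a b t = 1 := by
  refine smoothTransition.one_of_one_le ?_
  rw [one_le_div (periodicCutoff_denom_pos ha hab hbL)]
  have haL : |a| ≤ L := by rw [abs_of_pos ha]; exact (hab.trans hbL).le
  have := cos_mul_le_cos_mul (s := t) (t := a) (ha.trans (hab.trans hbL))
    (by rwa [abs_of_pos ha]) haL
  linarith

lemma periodicCutoff_eq_zero_of_cos_le (ha : 0 < a) (hab : a < b) (hbL : b < L)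
    (ht : cos (π / L * t) ≤ cos (π / L * b)) : periodicCutoff L a b t = 0 :=
  smoothTransition.zero_of_nonpos <|
    div_nonpos_of_nonpos_of_nonneg (sub_nonpos.2 ht) (periodicCutoff_denom_pos ha hab hbL).le

lemma periodicCutoff_eq_zero (ha : 0 < a) (hab : a < b) (hbL : b < L) (hb : b ≤ |t|)
    (ht : |t| ≤ L) : periodicCutoff L a b t = 0 := by
  have hb0 : 0 < b := ha.trans hab
  exact periodicCutoff_eq_zero_of_cos_le ha hab hbL
    (cos_mul_le_cos_mul (hb0.trans hbL) (by rwa [abs_of_pos hb0]) ht)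

lemma periodicCutoff_le_periodicCutoff (ha : 0 < a) (hab : a < b) (hbL : b < L)
    (hst : |s| ≤ |t|) (ht : |t| ≤ L) : periodicCutoff L a b t ≤ periodicCutoff L a b s := by
  refine smoothTransition.monotone ?_
  have := cos_mul_le_cos_mul (ha.trans (hab.trans hbL)) hst ht
  have := periodicCutoff_denom_pos ha hab hbL
  gcongr

lemma exists_abs_deriv_periodicCutoff_le (hL : L ≠ 0) :
    ∃ C, ∀ t, |deriv (periodicCutoff L a b) t| ≤ C := by
  have hper : Function.Periodic (deriv (periodicCutoff L a b)) (2 * L) := by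
    intro t
    rw [← deriv_comp_add_const]
    congr 1
    exact funext (periodicCutoff_periodic hL)
  have hcont : Continuous (deriv (periodicCutoff L a b)) :=
    contDiff_periodicCutoff.continuous_deriv (by simp)
  obtain ⟨C, hC⟩ := (hper.isBounded_of_continuous (by simpa using hL) hcont).exists_norm_le
  exact ⟨C, fun t => hC _ (mem_range_self t)⟩

end periodicCutoff

section periodicPotential

variable {L a b s t : ℝ}

lemma periodicPotential_nonneg : 0 ≤ periodicPotential L a b t := by
  have h0 : 0 ≤ periodicCutoff L a b t := periodicCutoff_nonneg
  have h1 : 0 ≤ 1 - periodicCutoff L a b t := sub_nonneg.2 periodicCutoff_le_one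
  have h2 : 0 ≤ 1 - cos (π / L * t) := sub_nonneg.2 (cos_le_one _)
  unfold periodicPotential
  positivity

lemma periodicPotential_periodic (hL : L ≠ 0) :
    Function.Periodic (periodicPotential L a b) (2 * L) := by
  intro t
  have h : π / L * (t + 2 * L) = π / L * t + 2 * π := by field_simp
  have h' : π / (2 * L) * (t + 2 * L) = π / (2 * L) * t + π := by field_simp
  simp only [periodicPotential, h, h', cos_add_two_pi, tan_periodic _,
    periodicCutoff_periodic hL _]

lemma contDiff_periodicPotential (ha : 0 < a) (hab : a < b) (hbL : b < L) :
    ContDiff ℝ (⊤ : ℕ∞) (periodicPotential L a b) := by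
  have hb : 0 < b := ha.trans hab
  have hL : 0 < L := hb.trans hbL
  have hcut : ContDiff ℝ (⊤ : ℕ∞) (periodicCutoff L a b) := contDiff_periodicCutoff
  refine ContDiff.add ?_ ((contDiff_const.sub hcut).mul (by fun_prop))
  rw [contDiff_iff_contDiffAt]
  intro t
  by_cases ht : cos (π / (2 * L) * t) = 0
  · have hcos : cos (π / L * t) = -1 := by
      have : π / L * t = 2 * (π / (2 * L) * t) := by field_simp
      rw [this, cos_two_mul, ht]
      norm_num
    have hlt : cos (π / L * t) < cos (π / L * b) := by
      have h := cos_mul_lt_cos_mul (s := b) (t := L) hL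
        (by rwa [abs_of_pos hb, abs_of_pos hL]) (abs_of_pos hL).le
      rwa [div_mul_cancel₀ _ hL.ne', cos_pi, ← hcos] at h
    have hev : ∀ᶠ u in nhds t, cos (π / L * u) < cos (π / L * b) :=
      (show Continuous fun u => cos (π / L * u) by fun_prop).continuousAt.eventually_lt
        continuousAt_const hlt
    refine (contDiffAt_const (c := (0 : ℝ))).congr_of_eventuallyEq ?_
    filter_upwards [hev] with u hu
    rw [periodicCutoff_eq_zero_of_cos_le ha hab hbL hu.le, zero_mul]
  · have htan : ContDiffAt ℝ (⊤ : ℕ∞) (fun u => tan (π / (2 * L) * u)) t :=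
      (contDiffAt_tan.2 ht).comp t (by fun_prop)
    have harctan := contDiff_arctan.contDiffAt.comp t htan
    exact hcut.contDiffAt.mul (((contDiffAt_const.mul harctan).pow 2).div_const 2)

lemma periodicPotential_eq (ha : 0 < a) (hab : a < b) (hbL : b < L) (ht : |t| ≤ L) :
    periodicPotential L a b t = periodicCutoff L a b t * (t ^ 2 / 2) +
      (1 - periodicCutoff L a b t) * (L ^ 2 / 4 * (1 - cos (π / L * t))) := by
  have hL : 0 < L := ha.trans (hab.trans hbL)
  unfold periodicPotential
  rcases ht.eq_or_lt with h | h
  · rw [periodicCutoff_eq_zero ha hab hbL (h ▸ hbL.le) ht, zero_mul, zero_mul]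
  · have hp : 0 < π / (2 * L) := by positivity
    have hpL : π / (2 * L) * L = π / 2 := by field_simp
    obtain ⟨h1, h2⟩ := abs_lt.1 h
    rw [arctan_tan (by nlinarith) (by nlinarith)]
    have : 2 * L / π * (π / (2 * L) * t) = t := by field_simp
    rw [this]

lemma periodicPotential_eq_sq (ha : 0 < a) (hab : a < b) (hbL : b < L) (ht : |t| ≤ a) :
    periodicPotential L a b t = t ^ 2 / 2 := by
  rw [periodicPotential_eq ha hab hbL (ht.trans (hab.trans hbL).le),
    periodicCutoff_eq_one ha hab hbL ht]
  ring

lemma sq_div_two_le_one_sub_cos (hL : 0 < L) (ht : |t| ≤ L) :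
    t ^ 2 / 2 ≤ L ^ 2 / 4 * (1 - cos (π / L * t)) := by
  have hp : 0 < π / (2 * L) := by positivity
  have hsin : |t| / L ≤ sin (π / (2 * L) * |t|) := by
    have h : π / (2 * L) * |t| ≤ π / 2 := by
      calc π / (2 * L) * |t| ≤ π / (2 * L) * L := by gcongr
        _ = π / 2 := by field_simp
    calc |t| / L = 2 / π * (π / (2 * L) * |t|) := by field_simp
      _ ≤ _ := mul_le_sin (by positivity) h
  have hcos : cos (π / L * t) = 1 - 2 * sin (π / (2 * L) * |t|) ^ 2 := by
    have h2 : π / L * |t| = 2 * (π / (2 * L) * |t|) := by field_simp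
    rw [← cos_abs, abs_mul, abs_of_pos (div_pos pi_pos hL), h2, cos_two_mul, cos_sq']
    ring
  have hsq : (|t| / L) ^ 2 ≤ sin (π / (2 * L) * |t|) ^ 2 := by gcongr
  calc t ^ 2 / 2 = L ^ 2 / 2 * (|t| / L) ^ 2 := by rw [div_pow, sq_abs]; field_simp
    _ ≤ L ^ 2 / 2 * sin (π / (2 * L) * |t|) ^ 2 := by gcongr
    _ = _ := by rw [hcos]; ring

lemma periodicPotential_lt_periodicPotential (ha : 0 < a) (hab : a < b) (hbL : b < L)
    (hst : |s| < |t|) (ht : |t| ≤ L) : periodicPotential L a b s < periodicPotential L a b t := by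
  have hL : 0 < L := ha.trans (hab.trans hbL)
  rw [periodicPotential_eq ha hab hbL (hst.le.trans ht), periodicPotential_eq ha hab hbL ht]
  have hcut := periodicCutoff_le_periodicCutoff ha hab hbL hst.le ht
  have hsq : s ^ 2 / 2 < t ^ 2 / 2 := by linarith [sq_lt_sq.2 hst]
  have hcos : L ^ 2 / 4 * (1 - cos (π / L * s)) < L ^ 2 / 4 * (1 - cos (π / L * t)) := by
    have := cos_mul_lt_cos_mul hL hst ht
    gcongr
  have hle := sq_div_two_le_one_sub_cos hL (hst.le.trans ht)
  have h0 : 0 ≤ periodicCutoff L a b t := periodicCutoff_nonneg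
  have h1 : periodicCutoff L a b t ≤ 1 := periodicCutoff_le_one
  generalize periodicCutoff L a b s = p at *
  generalize periodicCutoff L a b t = q at *
  generalize L ^ 2 / 4 * (1 - cos (π / L * s)) = u at *
  generalize L ^ 2 / 4 * (1 - cos (π / L * t)) = v at *
  have hmix : 0 < q * (t ^ 2 / 2 - s ^ 2 / 2) + (1 - q) * (v - u) := by
    rcases h0.eq_or_lt with h | h
    · rw [← h]; linarith
    · have := mul_pos h (sub_pos.2 hsq)
      have := mul_nonneg (sub_nonneg.2 h1) (sub_nonneg.2 hcos.le)
      linarith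
  have hshift : 0 ≤ (p - q) * (u - s ^ 2 / 2) :=
    mul_nonneg (sub_nonneg.2 hcut) (sub_nonneg.2 hle)
  linarith

lemma not_isLocalMin_periodicPotential (ha : 0 < a) (hab : a < b) (hbL : b < L) (ht0 : t ≠ 0)
    (ht : |t| ≤ L) : ¬ IsLocalMin (periodicPotential L a b) t := by
  intro hmin
  have hlim : Filter.Tendsto (fun r : ℝ => r * t) (nhdsWithin 1 (Iio 1)) (nhds t) := by
    have : ContinuousAt (fun r : ℝ => r * t) 1 := by fun_prop
    simpa [ContinuousAt] using this.mono_left (nhdsWithin_le_nhds (s := Iio 1))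
  have hIoo : ∀ᶠ r : ℝ in nhdsWithin 1 (Iio 1), r ∈ Ioo (0 : ℝ) 1 :=
    Ioo_mem_nhdsLT one_pos
  obtain ⟨r, hr, hr0, hr1⟩ := ((hlim.eventually hmin).and hIoo).exists
  refine (periodicPotential_lt_periodicPotential ha hab hbL ?_ ht).not_ge hr
  rw [abs_mul, abs_of_pos hr0]
  exact mul_lt_of_lt_one_left (abs_pos.2 ht0) hr1

lemma exists_eq_of_isLocalMin_periodicPotential (ha : 0 < a) (hab : a < b) (hbL : b < L)
    (hmin : IsLocalMin (periodicPotential L a b) t) : ∃ k : ℤ, t = 2 * L * k := by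
  have hL : 0 < L := ha.trans (hab.trans hbL)
  have hper := (periodicPotential_periodic (a := a) (b := b) hL.ne').int_mul
  set k : ℤ := round (t / (2 * L)) with hk
  refine ⟨k, ?_⟩
  have hmin' : IsLocalMin (periodicPotential L a b) (t - 2 * L * k) := by
    have hlim : Filter.Tendsto (fun u : ℝ => u + k * (2 * L)) (nhds (t - 2 * L * k)) (nhds t) := by
      have : Continuous (fun u : ℝ => u + k * (2 * L)) := by fun_prop
      convert this.tendsto (t - 2 * L * k) using 2
      ring
    filter_upwards [hlim.eventually hmin] with u hu
    have heq := hper k (t - 2 * L * k)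
    rw [show t - 2 * L * k + k * (2 * L) = t by ring] at heq
    rwa [hper k u, heq] at hu
  by_contra hne
  refine not_isLocalMin_periodicPotential ha hab hbL (sub_ne_zero.2 hne) ?_ hmin'
  have hround := abs_sub_round (t / (2 * L))
  rw [← hk] at hround
  calc |t - 2 * L * k| = 2 * L * |t / (2 * L) - k| := by
        rw [← abs_of_pos (show 0 < 2 * L by positivity), ← abs_mul,
          abs_of_pos (show 0 < 2 * L by positivity)]
        congr 1
        field_simp
    _ ≤ 2 * L * (1 / 2) := by gcongr
    _ = L := by ring

end periodicPotential

lemma IsLocalMin.of_sum_apply {ι : Type*} [Fintype ι] {f : ℝ → ℝ} {y : ι → ℝ}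
    (h : IsLocalMin (fun y : ι → ℝ => ∑ i, f (y i)) y) (i : ι) : IsLocalMin f (y i) := by
  classical
  have hlim : Filter.Tendsto (Function.update y i) (nhds (y i)) (nhds y) := by
    have : Continuous (Function.update y i) := by fun_prop
    simpa using this.tendsto (y i)
  filter_upwards [hlim.eventually h] with t ht
  rw [← Finset.add_sum_erase _ _ (Finset.mem_univ i),
    ← Finset.add_sum_erase (a := i) _ _ (Finset.mem_univ i)] at ht
  have hrest : ∑ j ∈ Finset.univ.erase i, f (Function.update y i t j) =
      ∑ j ∈ Finset.univ.erase i, f (y j) :=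
    Finset.sum_congr rfl fun j hj => by rw [Function.update_of_ne (Finset.ne_of_mem_erase hj)]
  rw [hrest, Function.update_self] at ht
  linarith

/-- Bound on the partial derivatives of `c * (1 - ∏ i, f (y i)) ^ 2` for a cutoff function `f`. -/
lemma sq_fderiv_one_sub_prod_sq_le {ι : Type*} [Fintype ι] [DecidableEq ι] {f : ℝ → ℝ} {c C : ℝ}
    (hf : Differentiable ℝ f) (hf0 : ∀ t, 0 ≤ f t) (hf1 : ∀ t, f t ≤ 1)
    (hC : ∀ t, |deriv f t| ≤ C) (y : ι → ℝ) (i : ι) :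
    (fderiv ℝ (fun y : ι → ℝ => c * (1 - ∏ i, f (y i)) ^ 2) y (Pi.single i 1)) ^ 2 ≤
      4 * c ^ 2 * C ^ 2 * (1 - ∏ i, f (y i)) ^ 2 := by
  set F : (ι → ℝ) → ℝ := fun y => c * (1 - ∏ i, f (y i)) ^ 2 with hF
  set P : ℝ := ∏ j ∈ Finset.univ.erase i, f (y j) with hP
  have hFd : DifferentiableAt ℝ F (Function.update y i (y i)) := by
    refine Differentiable.differentiableAt ?_
    have : ∀ i : ι, Differentiable ℝ fun y : ι → ℝ => f (y i) :=
      fun i => hf.comp (differentiable_apply i)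
    fun_prop
  have hline : ∀ t, F (Function.update y i t) = c * (1 - f t * P) ^ 2 := by
    intro t
    have hrest : ∏ j ∈ Finset.univ.erase i, f (Function.update y i t j) = P :=
      Finset.prod_congr rfl fun j hj => by rw [Function.update_of_ne (Finset.ne_of_mem_erase hj)]
    simp only [hF]
    rw [← Finset.mul_prod_erase _ _ (Finset.mem_univ i), hrest, Function.update_self]
  have hd1 := hFd.hasFDerivAt.comp_hasDerivAt (y i) (hasDerivAt_update y i (y i))
  rw [Function.update_eq_self] at hd1
  have hd2 : HasDerivAt (F ∘ Function.update y i)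
      (c * (2 * (1 - f (y i) * P) * (-(deriv f (y i) * P)))) (y i) := by
    rw [show F ∘ Function.update y i = fun t => c * (1 - f t * P) ^ 2 from funext hline]
    have h := (((hf (y i)).hasDerivAt.mul_const P).const_sub 1).pow 2 |>.const_mul c
    simpa using h
  rw [hd1.unique hd2, ← Finset.mul_prod_erase _ _ (Finset.mem_univ i), ← hP]
  have hP0 : 0 ≤ P := Finset.prod_nonneg fun j _ => hf0 _
  have hP1 : P ≤ 1 := Finset.prod_le_one (fun j _ => hf0 _) fun j _ => hf1 _
  have hbound : (deriv f (y i) * P) ^ 2 ≤ C ^ 2 := by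
    refine sq_le_sq' ?_ ?_ <;>
    · have h1 : |deriv f (y i) * P| ≤ C := by
        rw [abs_mul, abs_of_nonneg hP0]
        exact (mul_le_of_le_one_right (abs_nonneg _) hP1).trans (hC _)
      linarith [(abs_le.1 h1).1, (abs_le.1 h1).2]
  calc (c * (2 * (1 - f (y i) * P) * (-(deriv f (y i) * P)))) ^ 2
      = 4 * c ^ 2 * (deriv f (y i) * P) ^ 2 * (1 - f (y i) * P) ^ 2 := by ring
    _ ≤ _ := by gcongr

theorem stmt_10 (d : ℕ) (hd : 1 ≤ d) (K L G : ℝ) (hK : 0 < K)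
    (hL : Real.sqrt (2 * K) + 2 < L) (hG : 0 ≤ G) :
    ∃ m n : ℝ, ∃ σstar : ℝ, ∃ W σ : (Fin d → ℝ) → ℝ,
      Real.sqrt (2 * K) < n ∧ n < m ∧ m < L ∧ 0 < σstar ∧
      ContDiff ℝ (⊤ : ℕ∞) W ∧ ContDiff ℝ (⊤ : ℕ∞) σ ∧
      (∀ y, 0 ≤ W y) ∧ (∀ y, 0 ≤ σ y) ∧
      -- 2L-periodicity in each coordinate
      (∀ (y : Fin d → ℝ) (k : Fin d → ℤ), W (y + fun i => 2 * L * (k i)) = W y) ∧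
      (∀ (y : Fin d → ℝ) (k : Fin d → ℤ), σ (y + fun i => 2 * L * (k i)) = σ y) ∧
      -- (i) W(y) = |y|²/2 on [-m,m]^d
      (∀ y : Fin d → ℝ, (∀ i, y i ∈ Set.Icc (-m) m) → W y = (∑ i, (y i) ^ 2) / 2) ∧
      -- (ii) every local minimum point of W lies in 2Lℤ^d
      (∀ y : Fin d → ℝ, IsLocalMin W y → ∃ k : Fin d → ℤ, ∀ i, y i = 2 * L * (k i)) ∧
      -- (iii) σ = σ_* on [-L,L]^d \ [-m,m]^d
      (∀ y : Fin d → ℝ, (∀ i, y i ∈ Set.Icc (-L) L) → ¬ (∀ i, y i ∈ Set.Icc (-m) m) →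
        σ y = σstar) ∧
      -- (iv) σ = 0 on [-n,n]^d
      (∀ y : Fin d → ℝ, (∀ i, y i ∈ Set.Icc (-n) n) → σ y = 0) ∧
      -- (v) G·sup|∇σ| ≤ 1/2 and |∇σ|² ≤ σ
      (∀ y : Fin d → ℝ,
        G * Real.sqrt (∑ i, (fderiv ℝ σ y (Pi.single i 1)) ^ 2) ≤ 1 / 2 ∧
        (∑ i, (fderiv ℝ σ y (Pi.single i 1)) ^ 2) ≤ σ y) := by
  set q := Real.sqrt (2 * K)
  have hq0 : 0 ≤ q := Real.sqrt_nonneg _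
  have hL0 : 0 < L := by linarith
  obtain ⟨C, hC⟩ := exists_abs_deriv_periodicCutoff_le (a := q + 1 / 2) (b := q + 1) hL0.ne'
  set c : ℝ := 1 / (4 * (d * C ^ 2 + G ^ 2 + 1)) with hc
  have hc0 : 0 < c := by positivity
  have hcmul : 4 * c * (d * C ^ 2 + G ^ 2 + 1) = 1 := by rw [hc]; field_simp
  have hcC : 4 * c * (d * C ^ 2) ≤ 1 := by nlinarith [sq_nonneg G]
  have hcG : 4 * c * G ^ 2 ≤ 1 := by
    have : 0 ≤ c * (d * C ^ 2) := by positivity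
    nlinarith
  have hn : 0 < q + 1 / 2 := by linarith
  have hnm : q + 1 / 2 < q + 1 := by linarith
  have hm : 0 < q + 1 := by linarith
  have hmL : q + 1 < L := by linarith
  have hmb : q + 1 < q + 2 := by linarith
  set χ := periodicCutoff L (q + 1 / 2) (q + 1)
  set φ := periodicPotential L (q + 1) (q + 2)
  have hχs : ContDiff ℝ (⊤ : ℕ∞) χ := contDiff_periodicCutoff
  have hφs : ContDiff ℝ (⊤ : ℕ∞) φ := contDiff_periodicPotential hm hmb hL
  have hχ0 : ∀ t, 0 ≤ χ t := fun t => periodicCutoff_nonneg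
  have hχ1 : ∀ t, χ t ≤ 1 := fun t => periodicCutoff_le_one
  have hshift : ∀ (f : ℝ → ℝ), Function.Periodic f (2 * L) →
      ∀ (y : Fin d → ℝ) (k : Fin d → ℤ) (i : Fin d),
        f ((y + fun i => 2 * L * (k i)) i) = f (y i) := by
    intro f hf y k i
    rw [Pi.add_apply, mul_comm (2 * L)]
    exact hf.int_mul (k i) (y i)
  refine ⟨q + 1, q + 1 / 2, c, fun y => ∑ i, φ (y i), fun y => c * (1 - ∏ i, χ (y i)) ^ 2,
    by linarith, hnm, hmL, hc0, ?_, ?_, ?_, ?_, ?_, ?_, ?_, ?_, ?_, ?_, ?_⟩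
  · exact ContDiff.sum fun i _ => hφs.comp (contDiff_apply ℝ ℝ i)
  · exact contDiff_const.mul ((contDiff_const.sub
      (contDiff_prod fun i _ => hχs.comp (contDiff_apply ℝ ℝ i))).pow 2)
  · exact fun y => Finset.sum_nonneg fun i _ => periodicPotential_nonneg
  · exact fun y => by positivity
  · intro y k
    simp only [hshift φ (periodicPotential_periodic hL0.ne')]
  · intro y k
    simp only [hshift χ (periodicCutoff_periodic hL0.ne')]
  · intro y hy
    rw [Finset.sum_div]
    exact Finset.sum_congr rfl fun i _ =>
      periodicPotential_eq_sq hm hmb hL (abs_le.2 (hy i))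
  · intro y hy
    choose k hk using fun i =>
      exists_eq_of_isLocalMin_periodicPotential hm hmb hL (hy.of_sum_apply i)
    exact ⟨k, hk⟩
  · intro y hyL hym
    obtain ⟨i, hi⟩ := not_forall.1 hym
    have hzero : χ (y i) = 0 := by
      refine periodicCutoff_eq_zero hn hnm hmL ?_ (abs_le.2 (hyL i))
      exact (not_le.1 fun h => hi (abs_le.1 h)).le
    have hprod : ∏ i, χ (y i) = 0 := Finset.prod_eq_zero (Finset.mem_univ i) hzero
    simp [hprod]
  · intro y hy
    have hone : ∏ i, χ (y i) = 1 := Finset.prod_eq_one fun i _ =>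
      periodicCutoff_eq_one hn hnm hmL (abs_le.2 (hy i))
    simp [hone]
  · intro y
    have hg0 : 0 ≤ 1 - ∏ i, χ (y i) :=
      sub_nonneg.2 (Finset.prod_le_one (fun i _ => hχ0 _) fun i _ => hχ1 _)
    have hg1 : 1 - ∏ i, χ (y i) ≤ 1 :=
      sub_le_self _ (Finset.prod_nonneg fun i _ => hχ0 _)
    have hgrad : ∑ i, (fderiv ℝ (fun y : Fin d → ℝ => c * (1 - ∏ i, χ (y i)) ^ 2) y
        (Pi.single i 1)) ^ 2 ≤ c * (1 - ∏ i, χ (y i)) ^ 2 := by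
      calc _ ≤ ∑ _i : Fin d, 4 * c ^ 2 * C ^ 2 * (1 - ∏ i, χ (y i)) ^ 2 :=
            Finset.sum_le_sum fun i _ =>
              sq_fderiv_one_sub_prod_sq_le (hχs.differentiable (by simp)) hχ0 hχ1 hC y i
        _ = 4 * c * (d * C ^ 2) * (c * (1 - ∏ i, χ (y i)) ^ 2) := by
            rw [Finset.sum_const, Finset.card_univ, Fintype.card_fin, nsmul_eq_mul]; ring
        _ ≤ _ := mul_le_of_le_one_left (by positivity) hcC
    refine ⟨?_, hgrad⟩
    have hle : ∑ i, (fderiv ℝ (fun y : Fin d → ℝ => c * (1 - ∏ i, χ (y i)) ^ 2) y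
        (Pi.single i 1)) ^ 2 ≤ c :=
      hgrad.trans (mul_le_of_le_one_right hc0.le (pow_le_one₀ hg0 hg1))
    calc _ ≤ G * √c := by gcongr
      _ ≤ 1 / 2 := by
        refine abs_le_of_sq_le_sq' ?_ (by norm_num) |>.2
        rw [mul_pow, Real.sq_sqrt hc0.le]
        linarith
end

section
/- Let T > 0, α > 0, θ ≥ 1 and let g : [0,T] → ℝ be a measurable function with α ≤ g(s) ≤ θα for all s ∈ [0,T]. Then 8 (∫₀ᵀ g(s) ds) (∫₀ᵀ (T−s) (∫₀ˢ g(u) du) ds) − 4 (∫₀ᵀ (∫₀ˢ g(u) du) ds)² ≥ (4/3 − θ²) α² T⁴. -/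
open MeasureTheory intervalIntegral

theorem stmt_11 (T α θ : ℝ) (hT : 0 < T) (hα : 0 < α) (hθ : 1 ≤ θ)
    (g : ℝ → ℝ) (hg : Measurable g)
    (hbound : ∀ s ∈ Set.Icc (0:ℝ) T, α ≤ g s ∧ g s ≤ θ * α) :
    (4 / 3 - θ ^ 2) * α ^ 2 * T ^ 4 ≤
      8 * (∫ s in (0:ℝ)..T, g s) *
          (∫ s in (0:ℝ)..T, (T - s) * ∫ u in (0:ℝ)..s, g u)
        - 4 * (∫ s in (0:ℝ)..T, ∫ u in (0:ℝ)..s, g u) ^ 2 := by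
  have hgi : IntervalIntegrable g volume 0 T := by
    refine (intervalIntegrable_const (c := θ * α)).mono_fun hg.aestronglyMeasurable ?_
    refine (ae_restrict_iff' measurableSet_uIoc).2 (Filter.Eventually.of_forall fun s hs => ?_)
    rw [Set.uIoc_of_le hT.le] at hs
    obtain ⟨h₁, h₂⟩ := hbound s ⟨hs.1.le, hs.2⟩
    beta_reduce
    rw [Real.norm_of_nonneg (hα.le.trans h₁), Real.norm_of_nonneg (by positivity)]
    exact h₂
  have hprim : ∀ s ∈ Set.Icc (0:ℝ) T,
      α * s ≤ ∫ u in (0:ℝ)..s, g u ∧ ∫ u in (0:ℝ)..s, g u ≤ θ * α * s := by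
    intro s hs
    have hgs : IntervalIntegrable g volume 0 s := hgi.mono_set <| by
      rw [Set.uIcc_of_le hs.1, Set.uIcc_of_le hT.le]
      exact Set.Icc_subset_Icc_right hs.2
    have hlo := integral_mono_on hs.1 (intervalIntegrable_const (c := α)) hgs
      fun u hu => (hbound u ⟨hu.1, hu.2.trans hs.2⟩).1
    have hhi := integral_mono_on hs.1 hgs (intervalIntegrable_const (c := θ * α))
      fun u hu => (hbound u ⟨hu.1, hu.2.trans hs.2⟩).2
    simp only [intervalIntegral.integral_const, smul_eq_mul, sub_zero] at hlo hhi
    constructor <;> linarith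
  have hcont : ContinuousOn (fun s => ∫ u in (0:ℝ)..s, g u) (Set.uIcc 0 T) :=
    continuousOn_primitive_interval' hgi Set.left_mem_uIcc
  have hA : α * T ≤ ∫ s in (0:ℝ)..T, g s := (hprim T ⟨hT.le, le_rfl⟩).1
  have hB : α * T ^ 3 / 6 ≤ ∫ s in (0:ℝ)..T, (T - s) * ∫ u in (0:ℝ)..s, g u := by
    calc α * T ^ 3 / 6 = ∫ s in (0:ℝ)..T, (α * T * s - α * s ^ 2) := by
          rw [integral_sub (Continuous.intervalIntegrable (by fun_prop) _ _)
            (Continuous.intervalIntegrable (by fun_prop) _ _), intervalIntegral.integral_const_mul,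
            intervalIntegral.integral_const_mul, integral_id, integral_pow]
          norm_num
          ring
      _ ≤ _ := by
          refine integral_mono_on hT.le (Continuous.intervalIntegrable (by fun_prop) _ _)
            (ContinuousOn.intervalIntegrable (by fun_prop)) fun s hs => ?_
          nlinarith [mul_le_mul_of_nonneg_left (hprim s hs).1 (sub_nonneg.2 hs.2)]
  have hC₀ : 0 ≤ ∫ s in (0:ℝ)..T, ∫ u in (0:ℝ)..s, g u :=
    integral_nonneg hT.le fun s hs => (mul_nonneg hα.le hs.1).trans (hprim s hs).1
  have hC : ∫ s in (0:ℝ)..T, ∫ u in (0:ℝ)..s, g u ≤ θ * α * T ^ 2 / 2 := by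
    calc _ ≤ ∫ s in (0:ℝ)..T, θ * α * s :=
          integral_mono_on hT.le hcont.intervalIntegrable
            (Continuous.intervalIntegrable (by fun_prop) _ _) fun s hs => (hprim s hs).2
      _ = _ := by
          rw [intervalIntegral.integral_const_mul, integral_id]
          ring
  have hAB := mul_le_mul hA hB (by positivity) ((by positivity : 0 ≤ α * T).trans hA)
  have hCC := pow_le_pow_left₀ hC₀ hC 2
  linarith
end
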